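/- With the bosonic Fock space V and normal-ordered modes as defined (n = 2, so S = {c, eps_1, eps_2, eps_3, eps_4, epsb_1, epsb_2, epsb_3, epsb_4}), define for k, l, M ∈ ℤ the operators X1(k) := :eps_1 eps_2*:(k) − :epsb_2 epsb_1*:(k) + :eps_3 eps_4*:(k) − :epsb_4 epsb_3*:(k) + :eps_3 epsb_4*:(k) − :eps_4 epsb_3*:(k), Y1(l) := :eps_1* eps_2:(l) − :epsb_2* epsb_1:(l) + :eps_3* eps_4:(l) − :epsb_4* epsb_3:(l) + :eps_3* epsb_4:(l) − :eps_4* epsb_3:(l), and A1(M) := :eps_1 eps_1*:(M) − :epsb_1 epsb_1*:(M) − :eps_2 eps_2*:(M) + :epsb_2 epsb_2*:(M) + 2·:eps_3 eps_3*:(M) − 2·:epsb_3 epsb_3*:(M). Then for all k, l ∈ ℤ, [X1(k), Y1(l)] = A1(k+l) − 6k·δ_{k,−l}·id_V. -/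

import Mathlib

/-!
The modes `:u v:(M)` are infinite sums, but on a fixed polynomial only finitely many summands act
nontrivially (`quad_apply`). Hence the commutator with a generating operator can be computed
termwise from the canonical commutation relations (`opOf_comm_apply`):
`[:u v:(M), x(i)] = ⟨v,x⟩ u(M+i) + ⟨u,x⟩ v(M+i)` (`quad_opOf`).

The bracket of two modes needs no rearrangement of double sums. By the Jacobi identity, the
difference of `[:u v:(k), :w z:(l)]` and its expected value commutes with every creation and
annihilation operator. By a Schur lemma (`eq_zero_of_commute`) such an operator on the Fock space
is zero as soon as its vacuum expectation is zero. That expectation is a two-point function: a sum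
of `(-l).toNat` equal terms when `k + l = 0` (`vac_quad_quad_one`), and antisymmetrizing it
produces the central term, since `k.toNat - (-k).toNat = k`.

The result, `quad_bracket`, says that the modes `:a b*:` form the affinization of a general linear
Lie algebra at level `-1`. Expanding `[X1(k), Y1(l)]` bilinearly into 36 such brackets, the six
dual pairs contribute the central term `-6k` and the remaining terms add up to `A1(k+l)`.
-/

noncomputable section

open MvPolynomial

/-- The index set `S` of bosonic symbols: `c`, `eps_1, …, eps_{n+2}`, `epsb_1, …, epsb_{n+2}`.
We index `eps_i` (resp. `epsb_i`) for `1 ≤ i ≤ n+2` by `Fin (n+2)` via `i-1`. -/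
abbrev BSym (n : ℕ) := Unit ⊕ (Fin (n+2) ⊕ Fin (n+2))

/-- `W n` is the ℂ-span of `S ∪ S*`; `Sum.inl` indexes `S`, `Sum.inr` indexes `S*`. -/
abbrev W (n : ℕ) := (BSym n ⊕ BSym n) → ℂ

/-- the symbol `c` -/
def cSym (n : ℕ) : BSym n := Sum.inl ()
/-- the symbol `eps_i`, `1 ≤ i ≤ n+2` (indexed by `i-1 : Fin (n+2)`) -/
def epsSym (n : ℕ) (i : Fin (n+2)) : BSym n := Sum.inr (Sum.inl i)
/-- the symbol `epsb_i`, `1 ≤ i ≤ n+2` (indexed by `i-1 : Fin (n+2)`) -/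
def epsbSym (n : ℕ) (i : Fin (n+2)) : BSym n := Sum.inr (Sum.inr i)

/-- a plain (unstarred) symbol, as an element of the span `W n` of `S ∪ S*` -/
def pl {n : ℕ} (s : BSym n) : W n := Pi.single (Sum.inl s) 1
/-- a starred symbol, as an element of the span `W n` of `S ∪ S*` -/
def st {n : ℕ} (s : BSym n) : W n := Pi.single (Sum.inr s) 1

/-- embed the span of `S` into `W n` (the identity of the span of `S`) -/
def plV {n : ℕ} (u : BSym n → ℂ) : W n := Sum.elim u 0
/-- the ℂ-linear star map from the span of `S` to `W n` -/
def stV {n : ℕ} (u : BSym n → ℂ) : W n := Sum.elim 0 u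

/-- The symmetric bilinear form `(·|·)` on the span of `S`:
`(eps_a|eps_b) = (epsb_a|epsb_b) = δ_{ab}` and all other pairs (including `c`) pair to `0`. -/
def symForm {n : ℕ} (u v : BSym n → ℂ) : ℂ :=
  ∑ i : Fin (n+2), (u (epsSym n i) * v (epsSym n i) + u (epsbSym n i) * v (epsbSym n i))

/-- weight used to define the antisymmetric pairing -/
def wt {n : ℕ} : BSym n → ℂ := Sum.elim (fun _ => 0) (fun _ => 1)

/-- The antisymmetric pairing `⟨·,·⟩` on `W n`:
`⟨u, v*⟩ = −(u|v) = −⟨v*, u⟩`, `⟨u, v⟩ = ⟨u*, v*⟩ = 0` for `u, v` in the span of `S`. -/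
def pair {n : ℕ} (U V : W n) : ℂ :=
  ∑ s : BSym n, wt s * (U (Sum.inr s) * V (Sum.inl s) - U (Sum.inl s) * V (Sum.inr s))

/-- The bosonic Fock space: a polynomial algebra in variables `x_{u,j}`,
`u ∈ S ∪ S*`, `j ∈ ℤ+1/2`, `j > 0`; the positive half-integer `j = k + 1/2` is
represented by `k : ℕ`. -/
abbrev Fock (n : ℕ) := MvPolynomial ((BSym n ⊕ BSym n) × ℕ) ℂ

/-- The operator `u(j)` for a basis symbol `u ∈ S ∪ S*` and half-integer `j = m + 1/2`
(`m : ℤ`): for `j < 0`, multiplication by `x_{u,-j}`; for `j > 0`,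
`u(j) = -∂/∂x_{u*,j}` (`u ∈ S`) and `u*(j) = ∂/∂x_{u,j}` (`u ∈ S`). -/
def opOf {n : ℕ} (b : BSym n ⊕ BSym n) (m : ℤ) : Module.End ℂ (Fock n) :=
  if m < 0 then LinearMap.mulLeft ℂ (X (b, (-m-1).toNat))
  else match b with
    | Sum.inl s => - (pderiv ((Sum.inr s : BSym n ⊕ BSym n), m.toNat)).toLinearMap
    | Sum.inr s => (pderiv ((Sum.inl s : BSym n ⊕ BSym n), m.toNat)).toLinearMap

/-- The operator `u(j)`, `j = m + 1/2`, for `u` in the span `W n` of `S ∪ S*`,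
extended ℂ-linearly in `u`. -/
def op {n : ℕ} (u : W n) (m : ℤ) : Module.End ℂ (Fock n) :=
  ∑ b : BSym n ⊕ BSym n, u b • opOf b m

/-- The summand `:u(j) v(M−j):` of the normal-ordered mode, `j = m + 1/2`:
`u(j)v(M−j)` if `j < 0` and `v(M−j)u(j)` if `j > 0` (note `M - j = (M-m-1) + 1/2`). -/
def nterm {n : ℕ} (u v : W n) (M m : ℤ) : Module.End ℂ (Fock n) :=
  if m < 0 then op u m * op v (M - m - 1) else op v (M - m - 1) * op u m

/-- The normal-ordered mode `:u v:(M) = Σ_{j ∈ ℤ+1/2} :u(j) v(M−j):`.  On each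
polynomial only finitely many summands act nonzero; the resulting linear operator is
defined here by its (finite, via `finsum`) values on the monomial basis. -/
def NO {n : ℕ} (u v : W n) (M : ℤ) : Module.End ℂ (Fock n) :=
  (basisMonomials ((BSym n ⊕ BSym n) × ℕ) ℂ).constr ℂ
    (fun d => ∑ᶠ m : ℤ, nterm u v M m ((monomial d) (1 : ℂ)))

/-- the symbol `eps_i` for `1 ≤ i ≤ n+2`, taking a natural-number index
(out-of-range indices are reduced mod `n+2`; all uses below are in range) -/
def epsN (n i : ℕ) : BSym n := epsSym n ⟨(i-1) % (n+2), Nat.mod_lt _ (by omega)⟩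

/-- the symbol `epsb_i` for `1 ≤ i ≤ n+2`, taking a natural-number index
(out-of-range indices are reduced mod `n+2`; all uses below are in range) -/
def epsbN (n i : ℕ) : BSym n := epsbSym n ⟨(i-1) % (n+2), Nat.mod_lt _ (by omega)⟩

/-- `X1(k) := :eps_1 eps_2*:(k) − :epsb_2 epsb_1*:(k) + :eps_3 eps_4*:(k) − :epsb_4 epsb_3*:(k)
+ :eps_3 epsb_4*:(k) − :eps_4 epsb_3*:(k)` -/
def X1mode (k : ℤ) : Module.End ℂ (Fock 2) :=
  NO (pl (epsN 2 1)) (st (epsN 2 2)) k - NO (pl (epsbN 2 2)) (st (epsbN 2 1)) k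
    + NO (pl (epsN 2 3)) (st (epsN 2 4)) k - NO (pl (epsbN 2 4)) (st (epsbN 2 3)) k
    + NO (pl (epsN 2 3)) (st (epsbN 2 4)) k - NO (pl (epsN 2 4)) (st (epsbN 2 3)) k

/-- `Y1(l) := :eps_1* eps_2:(l) − :epsb_2* epsb_1:(l) + :eps_3* eps_4:(l) − :epsb_4* epsb_3:(l)
+ :eps_3* epsb_4:(l) − :eps_4* epsb_3:(l)` -/
def Y1mode (l : ℤ) : Module.End ℂ (Fock 2) :=
  NO (st (epsN 2 1)) (pl (epsN 2 2)) l - NO (st (epsbN 2 2)) (pl (epsbN 2 1)) l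
    + NO (st (epsN 2 3)) (pl (epsN 2 4)) l - NO (st (epsbN 2 4)) (pl (epsbN 2 3)) l
    + NO (st (epsN 2 3)) (pl (epsbN 2 4)) l - NO (st (epsN 2 4)) (pl (epsbN 2 3)) l

/-- `A1(M) := :eps_1 eps_1*:(M) − :epsb_1 epsb_1*:(M) − :eps_2 eps_2*:(M) + :epsb_2 epsb_2*:(M)
+ 2:eps_3 eps_3*:(M) − 2:epsb_3 epsb_3*:(M)` -/
def A1mode (M : ℤ) : Module.End ℂ (Fock 2) :=
  NO (pl (epsN 2 1)) (st (epsN 2 1)) M - NO (pl (epsbN 2 1)) (st (epsbN 2 1)) M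
    - NO (pl (epsN 2 2)) (st (epsN 2 2)) M + NO (pl (epsbN 2 2)) (st (epsbN 2 2)) M
    + (2 : ℂ) • NO (pl (epsN 2 3)) (st (epsN 2 3)) M
    - (2 : ℂ) • NO (pl (epsbN 2 3)) (st (epsbN 2 3)) M

/-! ### Commutation relations of the generating operators -/

/-- The value of the antisymmetric pairing on two basis symbols of `S ∪ S*`, as realized by the
operators `opOf`: `⟨s, t*⟩ = -δ_{st} = -⟨t*, s⟩`. It differs from `pair` only on the symbol `c`,
which the operators treat like every other symbol. -/
def bpair {n : ℕ} : BSym n ⊕ BSym n → BSym n ⊕ BSym n → ℂ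
  | Sum.inl s, Sum.inr t => if s = t then -1 else 0
  | Sum.inr s, Sum.inl t => if s = t then 1 else 0
  | _, _ => 0

lemma bpair_antisymm {n : ℕ} (b c : BSym n ⊕ BSym n) : bpair b c = - bpair c b := by
  rcases b with s | s <;> rcases c with t | t <;> simp [bpair, eq_comm] <;> split_ifs <;> simp

lemma op_single {n : ℕ} (b : BSym n ⊕ BSym n) (m : ℤ) :
    op (Pi.single b 1 : W n) m = opOf b m := by
  unfold op
  rw [Finset.sum_eq_single b]
  · simp
  · intro c _ h
    simp [Pi.single_eq_of_ne h]
  · simp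

lemma opOf_neg_apply {n : ℕ} (b : BSym n ⊕ BSym n) {m : ℤ} (h : m < 0) (p : Fock n) :
    opOf b m p = X (b, (-m-1).toNat) * p := by
  simp [opOf, h]

lemma opOf_inl_apply {n : ℕ} (s : BSym n) {m : ℤ} (h : 0 ≤ m) (p : Fock n) :
    opOf (Sum.inl s) m p = - pderiv ((Sum.inr s : BSym n ⊕ BSym n), m.toNat) p := by
  simp [opOf, not_lt.mpr h]

lemma opOf_inr_apply {n : ℕ} (s : BSym n) {m : ℤ} (h : 0 ≤ m) (p : Fock n) :
    opOf (Sum.inr s) m p = pderiv ((Sum.inl s : BSym n ⊕ BSym n), m.toNat) p := by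
  simp [opOf, not_lt.mpr h]

lemma pderiv_comm {σ : Type*} (i j : σ) (p : MvPolynomial σ ℂ) :
    pderiv i (pderiv j p) = pderiv j (pderiv i p) := by
  classical
  have h : ⁅pderiv (R := ℂ) i, pderiv (R := ℂ) j⁆ = 0 := by
    apply derivation_ext
    intro k
    simp only [Derivation.commutator_apply, pderiv_X, Derivation.coe_zero, Pi.zero_apply]
    rw [Pi.single_apply, Pi.single_apply]
    split_ifs <;> simp
  have := congrArg (fun D => D p) h
  simpa [Derivation.commutator_apply, sub_eq_zero] using this

/-- The canonical commutation relations; `j = m + 1/2` and `j' = m' + 1/2` cancel exactly when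
`m + m' + 1 = 0`. -/
lemma opOf_comm_apply {n : ℕ} (b c : BSym n ⊕ BSym n) (m m' : ℤ) (p : Fock n) :
    opOf b m (opOf c m' p)
      = opOf c m' (opOf b m p) + (if m + m' + 1 = 0 then bpair b c else 0) • p := by
  rcases lt_or_ge m 0 with h | h <;> rcases lt_or_ge m' 0 with h' | h'
  · rw [if_neg (by omega)]
    simp only [opOf_neg_apply _ h, opOf_neg_apply _ h']
    simp only [zero_smul, add_zero]
    ring
  · have e : (-m-1).toNat = m'.toNat ↔ m + m' + 1 = 0 := by omega
    rcases c with t | t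
    · simp only [opOf_neg_apply _ h, opOf_inl_apply _ h', pderiv_mul, pderiv_X, Pi.single_apply,
        Prod.mk.injEq, e]
      rcases b with s | s <;> by_cases h1 : m + m' + 1 = 0 <;> by_cases h2 : s = t <;>
        simp [bpair, h1, h2]
    · simp only [opOf_neg_apply _ h, opOf_inr_apply _ h', pderiv_mul, pderiv_X, Pi.single_apply,
        Prod.mk.injEq, e]
      rcases b with s | s <;> by_cases h1 : m + m' + 1 = 0 <;> by_cases h2 : s = t <;>
        simp [bpair, h1, h2]
  · have e : (-m'-1).toNat = m.toNat ↔ m + m' + 1 = 0 := by omega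
    rcases b with t | t
    · simp only [opOf_neg_apply _ h', opOf_inl_apply _ h, pderiv_mul, pderiv_X, Pi.single_apply,
        Prod.mk.injEq, e]
      rcases c with s | s <;> by_cases h1 : m + m' + 1 = 0 <;> by_cases h2 : s = t <;>
        simp [bpair, h1, h2, eq_comm (a := t), add_comm]
    · simp only [opOf_neg_apply _ h', opOf_inr_apply _ h, pderiv_mul, pderiv_X, Pi.single_apply,
        Prod.mk.injEq, e]
      rcases c with s | s <;> by_cases h1 : m + m' + 1 = 0 <;> by_cases h2 : s = t <;>
        simp [bpair, h1, h2, eq_comm (a := t), add_comm]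
  · rw [if_neg (by omega)]
    rcases b with s | s <;> rcases c with t | t <;>
      simp only [opOf_inl_apply _ h, opOf_inl_apply _ h', opOf_inr_apply _ h,
        opOf_inr_apply _ h', map_neg, zero_smul, add_zero, pderiv_comm]

/-! ### Normal-ordered modes as locally finite sums -/

/-- The normal-ordered mode `:b c:(M)` of two basis symbols. -/
def quad {n : ℕ} (b c : BSym n ⊕ BSym n) (M : ℤ) : Module.End ℂ (Fock n) :=
  NO (Pi.single b 1) (Pi.single c 1) M

/-- The summand of `quad b c M` with index `m`. -/
def qterm {n : ℕ} (b c : BSym n ⊕ BSym n) (M m : ℤ) : Module.End ℂ (Fock n) :=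
  if m < 0 then opOf b m * opOf c (M - m - 1) else opOf c (M - m - 1) * opOf b m

lemma nterm_single {n : ℕ} (b c : BSym n ⊕ BSym n) (M m : ℤ) :
    nterm (Pi.single b 1 : W n) (Pi.single c 1) M m = qterm b c M m := by
  simp only [nterm, qterm, op_single]

/-- Annihilation operators of large index kill a given polynomial, which involves only finitely
many variables. -/
lemma opOf_eventually_zero {n : ℕ} (p : Fock n) :
    ∃ N : ℤ, 0 ≤ N ∧ ∀ m ≥ N, ∀ b, opOf b m p = 0 := by
  refine ⟨(p.vars.sup Prod.snd : ℕ) + 1, by positivity, fun m hm b => ?_⟩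
  have key : ∀ c : BSym n ⊕ BSym n, pderiv (c, m.toNat) p = 0 := by
    intro c
    apply pderiv_eq_zero_of_notMem_vars
    intro hc
    have := Finset.le_sup (f := Prod.snd) hc
    simp only at this
    omega
  rcases b with s | s
  · rw [opOf_inl_apply _ (by omega), key, neg_zero]
  · rw [opOf_inr_apply _ (by omega), key]

lemma qterm_eventually_zero {n : ℕ} (b c : BSym n ⊕ BSym n) (M : ℤ) (p : Fock n) :
    ∃ B₀ : ℤ, ∀ B ≥ B₀, ∀ m, m ∉ Finset.Icc (-B) B → qterm b c M m p = 0 := by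
  obtain ⟨N, hN0, hN⟩ := opOf_eventually_zero p
  refine ⟨N + |M| + 1, fun B hB m hm => ?_⟩
  have h1 := neg_abs_le M
  have h2 := abs_nonneg M
  rw [Finset.mem_Icc] at hm
  unfold qterm
  split_ifs with h
  · rw [Module.End.mul_apply, hN _ (by omega), map_zero]
  · rw [Module.End.mul_apply, hN _ (by omega), map_zero]

lemma quad_apply {n : ℕ} (b c : BSym n ⊕ BSym n) (M : ℤ) (p : Fock n) :
    ∃ B₀ : ℤ, ∀ B ≥ B₀, quad b c M p = ∑ m ∈ Finset.Icc (-B) B, qterm b c M m p := by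
  induction p using MvPolynomial.induction_on' with
  | monomial d a =>
    obtain ⟨B₀, hB₀⟩ := qterm_eventually_zero b c M (monomial d (1 : ℂ))
    refine ⟨B₀, fun B hB => ?_⟩
    have ha : (monomial d a : Fock n) = a • monomial d (1 : ℂ) := by
      rw [smul_monomial, smul_eq_mul, mul_one]
    simp only [ha, map_smul, ← Finset.smul_sum]
    congr 1
    have hb : (monomial d (1 : ℂ) : Fock n)
        = basisMonomials ((BSym n ⊕ BSym n) × ℕ) ℂ d := by simp
    rw [quad, NO]
    conv_lhs => rw [hb, Module.Basis.constr_basis]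
    simp only [nterm_single]
    apply finsum_eq_sum_of_support_subset
    intro m hm
    by_contra hm'
    exact hm (hB₀ B hB m (by simpa using hm'))
  | add p q hp hq =>
    obtain ⟨B₁, h₁⟩ := hp
    obtain ⟨B₂, h₂⟩ := hq
    refine ⟨max B₁ B₂, fun B hB => ?_⟩
    simp only [map_add, Finset.sum_add_distrib]
    rw [h₁ B (le_trans (le_max_left _ _) hB), h₂ B (le_trans (le_max_right _ _) hB)]

lemma qterm_opOf {n : ℕ} (b c x : BSym n ⊕ BSym n) (M m i : ℤ) (p : Fock n) :
    qterm b c M m (opOf x i p) = opOf x i (qterm b c M m p)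
      + ((if m = M + i then bpair c x • opOf b (M + i) p else 0)
        + if m = -i - 1 then bpair b x • opOf c (M + i) p else 0) := by
  have e1 : M - m - 1 + i + 1 = 0 ↔ m = M + i := by omega
  have e2 : m + i + 1 = 0 ↔ m = -i - 1 := by omega
  have main : ∀ b c : BSym n ⊕ BSym n, ∀ r s : ℤ,
      opOf b r (opOf c s (opOf x i p)) = opOf x i (opOf b r (opOf c s p))
        + ((if s + i + 1 = 0 then bpair c x • opOf b r p else 0)
          + if r + i + 1 = 0 then bpair b x • opOf c s p else 0) := by
    intro b c r s
    rw [opOf_comm_apply c x, map_add, map_smul, opOf_comm_apply b x]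
    split_ifs <;> simp only [zero_smul, add_zero, zero_add, add_assoc, add_comm]
  have f1 : (if m = M + i then bpair c x • opOf b m p else 0)
      = if m = M + i then bpair c x • opOf b (M + i) p else 0 := by
    split_ifs with h
    · rw [h]
    · rfl
  have f2 : (if m = -i - 1 then bpair b x • opOf c (M - m - 1) p else 0)
      = if m = -i - 1 then bpair b x • opOf c (M + i) p else 0 := by
    split_ifs with h
    · rw [h]; congr 3; ring
    · rfl
  unfold qterm
  by_cases h0 : m < 0
  · simp only [if_pos h0, Module.End.mul_apply, main, e1, e2, f1, f2]
  · simp only [if_neg h0, Module.End.mul_apply, main, e1, e2, f1, f2]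
    rw [add_comm (ite (m = -i - 1) _ _)]

/-- The modes `quad` act on the generating operators by commutators, linearly. -/
lemma quad_opOf {n : ℕ} (b c x : BSym n ⊕ BSym n) (M i : ℤ) (p : Fock n) :
    quad b c M (opOf x i p) = opOf x i (quad b c M p)
      + (bpair c x • opOf b (M + i) p + bpair b x • opOf c (M + i) p) := by
  obtain ⟨B₁, h₁⟩ := quad_apply b c M p
  obtain ⟨B₂, h₂⟩ := quad_apply b c M (opOf x i p)
  set B := max (max B₁ B₂) (|M + i| + |i| + 1) with hB
  have hB1 : B₁ ≤ B := le_trans (le_max_left _ _) (le_max_left _ _)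
  have hB2 : B₂ ≤ B := le_trans (le_max_right _ _) (le_max_left _ _)
  have hB3 : |M + i| + |i| + 1 ≤ B := le_max_right _ _
  have a1 := neg_abs_le (M + i)
  have a2 := le_abs_self (M + i)
  have a3 := neg_abs_le i
  have a4 := le_abs_self i
  have m1 : M + i ∈ Finset.Icc (-B) B := by rw [Finset.mem_Icc]; omega
  have m2 : -i - 1 ∈ Finset.Icc (-B) B := by rw [Finset.mem_Icc]; omega
  rw [h₁ B hB1, h₂ B hB2]
  simp only [qterm_opOf, Finset.sum_add_distrib, map_sum, Finset.sum_ite_eq', m1, m2, if_true]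

/-! ### A Schur lemma for the Fock space -/

/-- The vacuum functional `p ↦ p(0)`. -/
def vac {n : ℕ} (p : Fock n) : ℂ := constantCoeff p

@[simp] lemma vac_add {n : ℕ} (p q : Fock n) : vac (p + q) = vac p + vac q := map_add _ _ _
@[simp] lemma vac_sub {n : ℕ} (p q : Fock n) : vac (p - q) = vac p - vac q := map_sub _ _ _
@[simp] lemma vac_zero {n : ℕ} : vac (0 : Fock n) = 0 := map_zero _
@[simp] lemma vac_one {n : ℕ} : vac (1 : Fock n) = 1 := map_one _
@[simp] lemma vac_smul {n : ℕ} (a : ℂ) (p : Fock n) : vac (a • p) = a * vac p := by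
  simp [vac, smul_eq_C_mul]
lemma vac_sum {n : ℕ} {ι : Type*} (s : Finset ι) (f : ι → Fock n) :
    vac (∑ i ∈ s, f i) = ∑ i ∈ s, vac (f i) := map_sum constantCoeff _ _

lemma vac_opOf_neg {n : ℕ} (b : BSym n ⊕ BSym n) {m : ℤ} (h : m < 0) (p : Fock n) :
    vac (opOf b m p) = 0 := by
  simp [opOf_neg_apply _ h, vac]

lemma opOf_one {n : ℕ} (b : BSym n ⊕ BSym n) {m : ℤ} (h : 0 ≤ m) :
    opOf b m (1 : Fock n) = 0 := by
  rcases b with s | s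
  · simp [opOf_inl_apply _ h]
  · simp [opOf_inr_apply _ h]

/-- An endomorphism commuting with all creation and annihilation operators is determined by its
vacuum expectation: commuting with multiplications it is multiplication by `D 1`, and all partial
derivatives of `D 1` vanish. -/
lemma eq_zero_of_commute {n : ℕ} (D : Module.End ℂ (Fock n))
    (h : ∀ x i p, D (opOf x i p) = opOf x i (D p)) (h0 : vac (D 1) = 0) : D = 0 := by
  have hX : ∀ y p, D (X y * p) = X y * D p := by
    rintro ⟨b, j⟩ p
    have := h b (-(j : ℤ) - 1) p
    rw [opOf_neg_apply _ (by omega), opOf_neg_apply _ (by omega)] at this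
    simpa using this
  have hd : ∀ y, pderiv y (D 1) = 0 := by
    rintro ⟨b, j⟩
    rcases b with s | s
    · have := h (Sum.inr s) j 1
      rw [opOf_one _ (by omega), map_zero, opOf_inr_apply _ (by omega)] at this
      simpa using this.symm
    · have := h (Sum.inl s) j 1
      rw [opOf_one _ (by omega), map_zero, opOf_inl_apply _ (by omega)] at this
      simpa using this.symm
  have h1 : D 1 = 0 := by
    ext d
    rw [coeff_zero]
    by_cases hd0 : d = 0
    · subst hd0
      exact h0
    · obtain ⟨y, hy⟩ := Finsupp.ne_iff.mp hd0
      have hle : Finsupp.single y 1 ≤ d := by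
        rw [Finsupp.single_le_iff]
        exact Nat.one_le_iff_ne_zero.mpr hy
      have := congrArg (coeff (d - Finsupp.single y 1)) (hd y)
      rw [coeff_pderiv, tsub_add_cancel_of_le hle, coeff_zero] at this
      rcases mul_eq_zero.mp this with h' | h'
      · exact h'
      · exact absurd h' (Nat.cast_add_one_ne_zero _)
  refine LinearMap.ext fun p => ?_
  rw [LinearMap.zero_apply]
  induction p using MvPolynomial.induction_on with
  | C a =>
    have : (C a : Fock n) = a • 1 := by rw [smul_eq_C_mul, mul_one]
    rw [this, map_smul, h1, smul_zero]
  | add p q hp hq => rw [map_add, hp, hq, add_zero]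
  | mul_X p y hp => rw [mul_comm, hX, hp, mul_zero]

/-! ### The bracket of two normal-ordered modes -/

lemma quad_one {n : ℕ} (b c : BSym n ⊕ BSym n) (M : ℤ) :
    quad b c M (1 : Fock n)
      = ∑ m ∈ Finset.Icc M (-1), opOf b m (opOf c (M - m - 1) 1) := by
  obtain ⟨B₁, h₁⟩ := quad_apply b c M (1 : Fock n)
  set B := max B₁ (|M| + 1) with hB
  have hB1 : |M| + 1 ≤ B := le_max_right _ _
  have a1 := neg_abs_le M
  rw [h₁ B (le_max_left _ _)]
  symm
  have hsub : Finset.Icc M (-1) ⊆ Finset.Icc (-B) B := by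
    intro m hm
    rw [Finset.mem_Icc] at hm ⊢
    omega
  rw [← Finset.sum_subset hsub]
  · refine Finset.sum_congr rfl fun m hm => ?_
    rw [Finset.mem_Icc] at hm
    rw [qterm, if_pos (by omega), Module.End.mul_apply]
  · intro m _ hm
    rw [Finset.mem_Icc] at hm
    unfold qterm
    split_ifs with h
    · rw [Module.End.mul_apply, opOf_one _ (by omega), map_zero]
    · rw [Module.End.mul_apply, opOf_one _ (by omega), map_zero]

lemma vac_quad_one {n : ℕ} (b c : BSym n ⊕ BSym n) (M : ℤ) :
    vac (quad b c M (1 : Fock n)) = 0 := by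
  rw [quad_one, vac_sum]
  refine Finset.sum_eq_zero fun m hm => ?_
  rw [Finset.mem_Icc] at hm
  exact vac_opOf_neg _ (by omega) _

/-- The two-point function of the modes. The factor `(-l).toNat` counts the summands of
`:w z:(l)` that do not kill the vacuum. -/
lemma vac_quad_quad_one {n : ℕ} (u v w z : BSym n ⊕ BSym n) (k l : ℤ) :
    vac (quad u v k (quad w z l (1 : Fock n)))
      = if k + l = 0 then
          ((-l).toNat : ℂ) * (bpair v w * bpair u z + bpair u w * bpair v z) else 0 := by
  have two : ∀ (b : BSym n ⊕ BSym n) (i m' : ℤ), m' < 0 →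
      vac (opOf b i (opOf z m' (1 : Fock n))) = if i + m' + 1 = 0 then bpair b z else 0 := by
    intro b i m' hm'
    rw [opOf_comm_apply, vac_add, vac_opOf_neg _ hm', vac_smul, vac_one, zero_add, mul_one]
  have hs : ∀ m ∈ Finset.Icc l (-1),
      vac (quad u v k (opOf w m (opOf z (l - m - 1) (1 : Fock n))))
        = if k + l = 0 then bpair v w * bpair u z + bpair u w * bpair v z else 0 := by
    intro m hm
    rw [Finset.mem_Icc] at hm
    rw [quad_opOf, vac_add, vac_opOf_neg _ (by omega), vac_add, vac_smul, vac_smul,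
      two _ _ _ (by omega), two _ _ _ (by omega),
      show k + m + (l - m - 1) + 1 = k + l by ring]
    split_ifs <;> simp
  rw [quad_one, map_sum, vac_sum, Finset.sum_congr rfl hs, Finset.sum_const, Int.card_Icc,
    nsmul_eq_mul, show (-1 + 1 - l : ℤ) = -l by ring]
  split_ifs <;> simp

/-- The general commutator formula for normal-ordered quadratic modes, central term included. -/
lemma quad_bracket {n : ℕ} (u v w z : BSym n ⊕ BSym n) (k l : ℤ) :
    quad u v k * quad w z l - quad w z l * quad u v k
      = bpair v w • quad u z (k + l) + bpair u w • quad z v (k + l)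
        + bpair v z • quad u w (k + l) + bpair u z • quad w v (k + l)
        + ((k : ℂ) * (if k = -l then 1 else 0)
            * (bpair v w * bpair u z + bpair u w * bpair v z)) • 1 := by
  rw [← sub_eq_zero]
  apply eq_zero_of_commute
  · intro x i p
    simp only [LinearMap.sub_apply, LinearMap.add_apply, LinearMap.smul_apply,
      Module.End.mul_apply, Module.End.one_apply, quad_opOf, map_add, map_sub, map_smul]
    rw [show k + (l + i) = k + l + i by ring, show l + (k + i) = k + l + i by ring,
      bpair_antisymm z u, bpair_antisymm z v, bpair_antisymm w u, bpair_antisymm w v]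
    module
  · simp only [LinearMap.sub_apply, LinearMap.add_apply, LinearMap.smul_apply,
      Module.End.mul_apply, Module.End.one_apply, vac_sub, vac_add, vac_smul, vac_quad_one,
      vac_quad_quad_one, vac_one]
    rw [bpair_antisymm z u, bpair_antisymm z v, bpair_antisymm w u, bpair_antisymm w v]
    by_cases h : k = -l
    · subst h
      have hl : (((-l).toNat : ℤ) : ℂ) - ((l.toNat : ℤ) : ℂ) = ((-l : ℤ) : ℂ) := by
        rw [← Int.cast_sub]
        congr 1
        omega
      simp only [Int.cast_natCast] at hl
      simp only [neg_add_cancel, add_neg_cancel, if_true, neg_neg]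
      rw [← hl]
      ring
    · rw [if_neg (by omega), if_neg (by omega), if_neg h]
      ring

/-- The specialization of `quad_bracket` to the shape occurring in `[X1(k), Y1(l)]`. -/
lemma NO_bracket {n : ℕ} (a b c d : BSym n) (k l : ℤ) :
    NO (pl a) (st b) k * NO (st c) (pl d) l - NO (st c) (pl d) l * NO (pl a) (st b) k
      = (if b = d then (1 : ℂ) else 0) • NO (pl a) (st c) (k + l)
        - (if a = c then (1 : ℂ) else 0) • NO (pl d) (st b) (k + l)
        - ((k : ℂ) * (if k = -l then 1 else 0)
            * ((if b = d then (1 : ℂ) else 0) * (if a = c then (1 : ℂ) else 0)))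
          • (1 : Module.End ℂ (Fock n)) := by
  have h := quad_bracket (Sum.inl a) (Sum.inr b) (Sum.inr c) (Sum.inl d) k l
  simp only [quad] at h
  simp only [pl, st]
  rw [h]
  simp only [bpair]
  split_ifs <;> module

lemma epsN_eq_iff (i j : ℕ) : epsN 2 i = epsN 2 j ↔ (i - 1) % 4 = (j - 1) % 4 := by
  simp [epsN, epsSym]

lemma epsbN_eq_iff (i j : ℕ) : epsbN 2 i = epsbN 2 j ↔ (i - 1) % 4 = (j - 1) % 4 := by
  simp [epsbN, epsbSym]

lemma epsN_ne_epsbN (i j : ℕ) : epsN 2 i ≠ epsbN 2 j := by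
  simp [epsN, epsSym, epsbN, epsbSym]

/-- `[X1(k), Y1(l)] = A1(k+l) − 6k δ_{k,−l} id_V` (type `D₄`). -/
theorem bosonic_X1_Y1_bracket (k l : ℤ) :
    X1mode k * Y1mode l - Y1mode l * X1mode k
      = A1mode (k + l)
        - ((6 * k : ℂ) * (if k = -l then 1 else 0)) • (1 : Module.End ℂ (Fock 2)) := by
  have sub_left : ∀ x y z : Module.End ℂ (Fock 2),
      (x - y) * z - z * (x - y) = (x * z - z * x) - (y * z - z * y) := by
    intro x y z; rw [sub_mul, mul_sub]; abel
  have add_left : ∀ x y z : Module.End ℂ (Fock 2),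
      (x + y) * z - z * (x + y) = (x * z - z * x) + (y * z - z * y) := by
    intro x y z; rw [add_mul, mul_add]; abel
  have sub_right : ∀ x y z : Module.End ℂ (Fock 2),
      z * (x - y) - (x - y) * z = (z * x - x * z) - (z * y - y * z) := by
    intro x y z; rw [sub_mul, mul_sub]; abel
  have add_right : ∀ x y z : Module.End ℂ (Fock 2),
      z * (x + y) - (x + y) * z = (z * x - x * z) + (z * y - y * z) := by
    intro x y z; rw [add_mul, mul_add]; abel
  -- Bilinear expansion into 36 brackets, each given by `NO_bracket`.
  simp only [X1mode, Y1mode, A1mode, sub_left, add_left]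
  simp only [sub_right, add_right, NO_bracket, epsN_eq_iff, epsbN_eq_iff, epsN_ne_epsbN,
    (epsN_ne_epsbN _ _).symm, if_false]
  norm_num only [if_true, if_false]
  module
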